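/- Let q be an odd prime power of the form q = 2ab − 1, where a, b are odd positive integers with gcd(a,b) = 1. Let c be an integer with 1 ≤ c ≤ 2(a+b−1), and set c_1 = c if 1 ≤ c ≤ a+b−1 and c_1 = ⌊c/2⌋ if a+b ≤ c ≤ 2(a+b−1). Then for every integer s with 1 ≤ s ≤ ab + c_1 − 2, there exists a linear code C over 𝔽_{q²} of length n = c(q−1), dimension n − s, and minimum distance s + 1, such that C^{⊥H} ⊆ C. -/

import Mathlib

/-- Hamming weight: the number of nonzero coordinates. -/
noncomputable def wt {F : Type*} [Zero F] {n : ℕ} (x : Fin n → F) : ℕ :=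
  Set.ncard {i | x i ≠ 0}

/-- The Hermitian dual code of a linear code C ⊆ (F_{q²})^n. -/
noncomputable def dualH {F : Type*} [Field F] (q n : ℕ) (C : Submodule F (Fin n → F)) :
    Submodule F (Fin n → F) where
  carrier := {x | ∀ y ∈ C, ∑ i, x i * (y i) ^ q = 0}
  add_mem' := by
    intro a b ha hb y hy
    simp only [Set.mem_setOf_eq] at *
    simp [add_mul, Finset.sum_add_distrib, ha y hy, hb y hy]
  zero_mem' := by
    intro y hy; simp
  smul_mem' := by
    intro c x hx y hy
    simp only [Set.mem_setOf_eq] at *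
    simp [smul_eq_mul, mul_assoc, ← Finset.mul_sum, hx y hy]


/-- Vandermonde-type key fact: a low-weight word in the kernel is zero. -/
lemma key_low_weight {F ι : Type*} [Field F] [Fintype ι] [DecidableEq ι] (X V y : ι → F)
    (hX : Function.Injective X) (hV : ∀ i, V i ≠ 0) (s : ℕ)
    (hy : ∀ a < s, ∑ i, y i * (V i * X i ^ a) = 0) (S : Finset ι) (hS : S.card ≤ s)
    (hyS : ∀ i, i ∉ S → y i = 0) : y = 0 := by
  classical
  have hpoly : ∀ p : Polynomial F, p.natDegree < s → ∑ i, y i * (V i * p.eval (X i)) = 0 := by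
    intro p hp
    have : ∀ i, y i * (V i * p.eval (X i)) =
        ∑ a ∈ Finset.range s, p.coeff a * (y i * (V i * X i ^ a)) := by
      intro i
      rw [Polynomial.eval_eq_sum_range' hp, Finset.mul_sum, Finset.mul_sum]
      refine Finset.sum_congr rfl fun a _ => by ring
    simp_rw [this]
    rw [Finset.sum_comm]
    refine Finset.sum_eq_zero fun a ha => ?_
    rw [← Finset.mul_sum, hy a (Finset.mem_range.1 ha), mul_zero]
  funext j
  by_cases hj : j ∈ S
  · have hdeg : (∏ i ∈ S.erase j, (Polynomial.X - Polynomial.C (X i))).natDegree < s := by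
      rw [Polynomial.natDegree_prod_of_monic _ _ (fun i _ => Polynomial.monic_X_sub_C _)]
      simp only [Polynomial.natDegree_X_sub_C, Finset.sum_const, smul_eq_mul, mul_one]
      have := Finset.card_pos.2 ⟨j, hj⟩
      rw [Finset.card_erase_of_mem hj]; omega
    have h := hpoly _ hdeg
    rw [Finset.sum_eq_single j] at h
    · rcases mul_eq_zero.1 h with h | h
      · exact h
      · exfalso
        rcases mul_eq_zero.1 h with h | h
        · exact hV j h
        · rw [Polynomial.eval_prod, Finset.prod_eq_zero_iff] at h
          obtain ⟨i, hi, h⟩ := h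
          simp only [Polynomial.eval_sub, Polynomial.eval_X, Polynomial.eval_C, sub_eq_zero] at h
          exact (Finset.mem_erase.1 hi).1 (hX h).symm
    · intro i _ hij
      by_cases hi : i ∈ S
      · rw [Polynomial.eval_prod, Finset.prod_eq_zero (Finset.mem_erase.2 ⟨hij, hi⟩)]
        · simp
        · simp
      · simp [hyS i hi]
    · simp
  · exact hyS j hj

lemma code_exists {F : Type*} [Field F] (q n s : ℕ) (φ : F →+* F) (hφ : ∀ x, φ x = x ^ q)
    (hqq : ∀ x, φ (φ x) = x) (hs : s < n) (x v : Fin n → F) (hx : Function.Injective x)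
    (hv : ∀ i, v i ≠ 0)
    (horth : ∀ a < s, ∀ b < s, ∑ i, v i ^ (q + 1) * x i ^ (a + q * b) = 0) :
    ∃ C : Submodule F (Fin n → F), dualH q n C ≤ C ∧ Module.finrank F C = n - s ∧
      IsLeast {d : ℕ | ∃ x ∈ C, x ≠ 0 ∧ wt x = d} (s + 1) := by
  classical
  let V : Fin n → F := fun i => φ (v i)
  let X : Fin n → F := fun i => φ (x i)
  have hX : Function.Injective X := φ.injective.comp hx
  have hV : ∀ i, V i ≠ 0 := fun i => (map_ne_zero φ).2 (hv i)
  let ℓ : (Fin n → F) → ((Fin n → F) →ₗ[F] F) := fun w => Fintype.linearCombination F w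
  have hℓ : ∀ w y, ℓ w y = ∑ i, y i * w i := fun w y => by
    simp [ℓ, Fintype.linearCombination_apply]
  let L : (Fin n → F) →ₗ[F] (Fin s → F) :=
    LinearMap.pi fun a : Fin s => ℓ (fun i => V i * X i ^ (a : ℕ))
  have hL : ∀ y, y ∈ LinearMap.ker L ↔ ∀ a < s, ∑ i, y i * (V i * X i ^ a) = 0 := by
    intro y
    rw [LinearMap.mem_ker, funext_iff]
    simp only [L, LinearMap.pi_apply, hℓ, Pi.zero_apply]
    exact ⟨fun h a ha => h ⟨a, ha⟩, fun h a => h a a.2⟩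
  -- extension by zero
  have hext : ∀ m : ℕ, ∀ hm : m ≤ n, ∃ E : (Fin m → F) →ₗ[F] (Fin n → F),
      Function.Injective E ∧ ∀ y, ∀ i, i ∉ (Finset.univ.map (Fin.castLEEmb hm)) → E y i = 0 := by
    intro m hm
    refine ⟨{ toFun := fun y i => if h : (i : ℕ) < m then y ⟨i, h⟩ else 0
              map_add' := ?_, map_smul' := ?_ }, ?_, ?_⟩
    · intro y z; funext i; by_cases h : (i : ℕ) < m <;> simp [h]
    · intro r y; funext i; by_cases h : (i : ℕ) < m <;> simp [h]
    · intro y z hyz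
      funext i
      have := congrFun hyz ⟨i, by omega⟩
      simpa using this
    · intro y i hi
      have : ¬ (i : ℕ) < m := by
        intro h
        apply hi
        simp only [Finset.mem_map, Finset.mem_univ, true_and]
        exact ⟨⟨i, h⟩, by ext; simp⟩
      simp [this]
  refine ⟨LinearMap.ker L, ?_, ?_, ?_, ?_⟩
  · intro w hw
    have hw' : ∀ y ∈ LinearMap.ker L, ∑ i, w i * (y i) ^ q = 0 := hw
    let M : Fin s → ((Fin n → F) →ₗ[F] F) := fun a => ℓ (fun i => v i * x i ^ (a : ℕ))
    have hmem : ℓ w ∈ Submodule.span F (Set.range M) := by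
      apply mem_span_of_iInf_ker_le_ker
      intro y hy
      simp only [Submodule.mem_iInf, LinearMap.mem_ker] at hy ⊢
      have h1 : (fun i => φ (y i)) ∈ LinearMap.ker L := by
        rw [hL]
        intro a ha
        have h2 := congrArg φ (hy ⟨a, ha⟩)
        simp only [M, hℓ, map_sum, map_mul, map_pow, map_zero] at h2
        exact h2
      have h3 := hw' _ h1
      rw [hℓ, ← h3]
      refine Finset.sum_congr rfl fun i _ => ?_
      rw [← hφ, hqq]; ring
    rw [Submodule.mem_span_range_iff_exists_fun] at hmem
    obtain ⟨cf, hcf⟩ := hmem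
    have hwi : ∀ i, w i = ∑ a, cf a * (v i * x i ^ (a : ℕ)) := by
      intro i
      have := congrArg (fun T => T (Pi.single i 1)) hcf
      simp only [LinearMap.sum_apply, LinearMap.smul_apply, M, hℓ, smul_eq_mul] at this
      simpa [Pi.single_apply] using this.symm
    rw [hL]
    intro b hb
    simp_rw [hwi, Finset.sum_mul]
    rw [Finset.sum_comm]
    refine Finset.sum_eq_zero fun a _ => ?_
    have h := horth a a.2 b hb
    rw [← mul_zero (cf a), ← h, Finset.mul_sum]
    refine Finset.sum_congr rfl fun i _ => ?_
    simp only [V, X, hφ]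
    ring
  · obtain ⟨E, hE, hE0⟩ := hext s hs.le
    have hinj : Function.Injective (L ∘ₗ E) := by
      rw [← LinearMap.ker_eq_bot, LinearMap.ker_eq_bot']
      intro y hy
      have : E y ∈ LinearMap.ker L := hy
      have := key_low_weight X V (E y) hX hV s ((hL _).1 this) _ (by simp) (hE0 y)
      exact hE (by rw [this, map_zero])
    have hsurj : Function.Surjective (L ∘ₗ E) := LinearMap.injective_iff_surjective.1 hinj
    have hLs : Function.Surjective L := by
      intro y
      obtain ⟨t, ht⟩ := hsurj y
      exact ⟨E t, ht⟩
    have h1 := LinearMap.finrank_range_add_finrank_ker L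
    rw [LinearMap.range_eq_top.2 hLs, finrank_top] at h1
    simp only [Module.finrank_fin_fun] at h1
    omega
  · obtain ⟨E, hE, hE0⟩ := hext (s + 1) hs
    have hni : ¬ Function.Injective (L ∘ₗ E) := by
      intro h
      have := LinearMap.finrank_le_finrank_of_injective h
      simp at this
    rw [← LinearMap.ker_eq_bot, Submodule.eq_bot_iff] at hni
    push Not at hni
    obtain ⟨y, hy, hy0⟩ := hni
    have hyL : E y ∈ LinearMap.ker L := hy
    have hEy : E y ≠ 0 := fun h => hy0 (hE (by rw [h, map_zero]))
    refine ⟨E y, hyL, hEy, ?_⟩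
    apply le_antisymm
    · have : {i | E y i ≠ 0} ⊆ ((Finset.univ.map (Fin.castLEEmb hs) : Finset (Fin n)) : Set (Fin n)) := by
        intro i hi
        by_contra h
        exact hi (hE0 y i h)
      have h2 := Set.ncard_le_ncard this (Finset.finite_toSet _)
      rw [Set.ncard_coe_finset] at h2
      simpa [wt] using h2
    · by_contra hlt
      apply hEy
      refine key_low_weight X V (E y) hX hV s ((hL _).1 hyL) (Finset.univ.filter fun i => E y i ≠ 0) ?_ ?_
      · have : wt (E y) = (Finset.univ.filter fun i => E y i ≠ 0).card := by
          unfold wt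
          rw [← Set.ncard_coe_finset]; simp
        omega
      · simp
  · rintro d ⟨y, hyL, hy0, rfl⟩
    by_contra hlt
    apply hy0
    refine key_low_weight X V y hX hV s ((hL _).1 hyL) (Finset.univ.filter fun i => y i ≠ 0) ?_ ?_
    · have : wt y = (Finset.univ.filter fun i => y i ≠ 0).card := by
        unfold wt
        rw [← Set.ncard_coe_finset]; simp
      omega
    · simp

lemma weights_base {F ι : Type*} [Field F] [DecidableEq ι] (q : ℕ) (φ : F →+* F)
    (hφ : ∀ x, φ x = x ^ q) (hqq : ∀ x, φ (φ x) = x) (ε : F) (hε : ε ≠ 0) (hεq : φ ε = -ε)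
    (z : ι → F) (hz : ∀ k, z k ≠ 0) (S : Finset ι)
    (hD : ∀ k ∈ S, ∀ k' ∈ S, k ≠ k' → z k ^ q * z k' - z k' ^ q * z k ≠ 0) :
    ∃ u : ι → F, (∀ k ∈ S, u k ≠ 0 ∧ u k ^ q = u k) ∧
      ∀ i j, i + j + 2 = S.card → ∑ k ∈ S, u k * z k ^ (i + q * j) = 0 := by
  let D : ι → ι → F := fun k k' => z k ^ q * z k' - z k' ^ q * z k
  have hDφ : ∀ k k', φ (D k k') = - D k k' := by
    intro k k'
    simp only [D, ← hφ, map_sub, map_mul, hqq]; ring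
  refine ⟨fun k => ∏ k' ∈ S.erase k, (ε / D k k'), fun k hk => ⟨?_, ?_⟩, ?_⟩
  · rw [Finset.prod_ne_zero_iff]
    intro k' hk'
    obtain ⟨h1, h2⟩ := Finset.mem_erase.1 hk'
    exact div_ne_zero hε (hD k hk k' h2 h1.symm)
  · rw [← hφ, map_prod]
    refine Finset.prod_congr rfl fun k' _ => ?_
    rw [map_div₀, hεq, hDφ, neg_div_neg_eq]
  · intro i j hij
    let y : ι → F := fun k => z k ^ q / z k
    have hyD : ∀ k k', y k - y k' = D k k' / (z k * z k') := by
      intro k k'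
      have := hz k
      have := hz k'
      simp only [y, D]; field_simp
    have hinj : Set.InjOn y S := by
      intro k hk k' hk' h
      by_contra hne
      have h1 := hyD k k'
      rw [h, sub_self] at h1
      exact div_ne_zero (hD k hk k' hk' hne) (mul_ne_zero (hz k) (hz k')) h1.symm
    have hlag := Lagrange.coeff_eq_sum hinj (P := (Polynomial.X : Polynomial F) ^ j)
      (by rw [Polynomial.degree_X_pow]; norm_cast; omega)
    rw [Polynomial.coeff_X_pow, if_neg (by omega)] at hlag
    rw [← mul_zero (ε ^ (S.card - 1) / ∏ k ∈ S, z k), hlag, Finset.mul_sum]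
    refine Finset.sum_congr rfl fun k hk => ?_
    simp_rw [hyD]
    rw [Finset.prod_div_distrib, Finset.prod_div_distrib, Finset.prod_mul_distrib,
      Finset.prod_const, Finset.prod_const, Finset.card_erase_of_mem hk,
      ← Finset.mul_prod_erase S z hk, Polynomial.eval_pow, Polynomial.eval_X]
    have h1 : ∏ k' ∈ S.erase k, z k' ≠ 0 := Finset.prod_ne_zero_iff.2 fun k' _ => hz k'
    have h2 : ∏ k' ∈ S.erase k, D k k' ≠ 0 := Finset.prod_ne_zero_iff.2 fun k' hk' => by
      obtain ⟨h1, h2⟩ := Finset.mem_erase.1 hk'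
      exact hD k hk k' h2 h1.symm
    have h3 := hz k
    have h4 : S.card - 1 = i + j + 1 := by omega
    rw [h4]
    simp only [y, div_pow]
    rw [pow_add (z k), pow_mul]
    field_simp
    try ring

lemma weights_succ {F ι : Type*} [Field F] [DecidableEq ι] (q : ℕ) (φ : F →+* F)
    (hφ : ∀ x, φ x = x ^ q) (hqq : ∀ x, φ (φ x) = x) (ε : F) (hε : ε ≠ 0) (hεq : φ ε = -ε)
    (z : ι → F) (hz : ∀ k, z k ≠ 0) (S : Finset ι)
    (hD : ∀ k ∈ S, ∀ k' ∈ S, k ≠ k' → z k ^ q * z k' - z k' ^ q * z k ≠ 0)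
    (t : F) (ht : ∀ k ∈ S, z k ^ q * t - t ^ q * z k ≠ 0) :
    ∃ u : ι → F, (∀ k ∈ S, u k ≠ 0 ∧ u k ^ q = u k) ∧
      ∀ i j, i + j + 3 = S.card → ∑ k ∈ S, u k * z k ^ (i + q * j) = 0 := by
  obtain ⟨u, hu, hsum⟩ := weights_base q φ hφ hqq ε hε hεq z hz S hD
  refine ⟨fun k => u k * ((z k ^ q * t - t ^ q * z k) / ε), fun k hk => ⟨?_, ?_⟩, ?_⟩
  · exact mul_ne_zero (hu k hk).1 (div_ne_zero (ht k hk) hε)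
  · rw [mul_pow, (hu k hk).2, ← hφ, map_div₀, hεq]
    simp only [← hφ, map_sub, map_mul, hqq]
    congr 1
    rw [div_neg, ← neg_div]; congr 1; ring
  · intro i j hij
    have h1 := hsum i (j + 1) (by omega)
    have h2 := hsum (i + 1) j (by omega)
    have : ∀ k, u k * ((z k ^ q * t - t ^ q * z k) / ε) * z k ^ (i + q * j) =
        t / ε * (u k * z k ^ (i + q * (j + 1))) - t ^ q / ε * (u k * z k ^ (i + 1 + q * j)) := by
      intro k
      rw [mul_add, mul_one, ← add_assoc, pow_add _ (i + q * j) q]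
      rw [show i + 1 + q * j = (i + q * j) + 1 by ring, pow_succ _ (i + q * j)]
      field_simp
    simp_rw [this]
    rw [Finset.sum_sub_distrib, ← Finset.mul_sum, ← Finset.mul_sum, h1, h2]; simp

lemma prim_D_ne {F : Type*} [Field F] (q : ℕ) (hq : 2 ≤ q) (g : F)
    (hg : IsPrimitiveRoot g ((q - 1) * (q + 1))) (m n : ℕ) (hm : m < q + 1) (hn : n < q + 1)
    (hmn : m ≠ n) : (g ^ m) ^ q * g ^ n - (g ^ n) ^ q * g ^ m ≠ 0 := by
  intro h
  rw [sub_eq_zero, ← pow_mul, ← pow_mul, ← pow_add, ← pow_add] at h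
  have hpos : 0 < (q - 1) * (q + 1) := Nat.mul_pos (by omega) (by omega)
  have hgo : orderOf g = (q - 1) * (q + 1) := (IsPrimitiveRoot.iff_orderOf.1 hg)
  have hord : IsOfFinOrder g := by rw [← orderOf_pos_iff, hgo]; exact hpos
  have h0 : g ≠ 0 := hg.ne_zero hpos.ne'
  have key : ((q - 1 : ℕ) * (q + 1) : ℤ) ∣ ((m * q + n : ℕ) : ℤ) - ((n * q + m : ℕ) : ℤ) := by
    have h2 : g ^ (((m * q + n : ℕ) : ℤ) - ((n * q + m : ℕ) : ℤ)) = 1 := by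
      rw [zpow_sub₀ h0, zpow_natCast, zpow_natCast, h, div_self (pow_ne_zero _ h0)]
    have := (hg.zpow_eq_one_iff_dvd _).1 h2
    push_cast at this ⊢
    exact this
  rw [Nat.cast_sub (by omega)] at key
  have e : ((m * q + n : ℕ) : ℤ) - ((n * q + m : ℕ) : ℤ) = ((q : ℤ) - (1 : ℕ)) * ((m : ℤ) - n) := by
    push_cast; ring
  rw [e] at key
  have h3 := Int.dvd_of_mul_dvd_mul_left (by omega) key
  obtain ⟨t, ht⟩ := h3
  have ht1 : t < 1 := by nlinarith
  have ht2 : -1 < t := by nlinarith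
  have : t = 0 := by omega
  subst this
  omega

lemma main_code {F : Type*} [Field F] (q m c c1 s : ℕ) (hq : 3 ≤ q) (hqm : q + 1 = 2 * m)
    (φ : F →+* F) (hφ : ∀ x, φ x = x ^ q) (hqq : ∀ x, φ (φ x) = x) (g : F)
    (hg : IsPrimitiveRoot g ((q - 1) * (q + 1))) (hgen : ∀ x : F, x ≠ 0 → ∃ e : ℕ, x = g ^ e)
    (κ : Fin c → ℕ) (hκ : Function.Injective κ) (hκq : ∀ k, κ k < q + 1)
    (u : Fin c → F) (hu : ∀ k, u k ≠ 0 ∧ u k ^ q = u k)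
    (hE : ∀ i j, i + j + 2 = c1 →
      ∑ k ∈ Finset.univ.filter (fun k => Even (κ k)), u k * (g ^ κ k) ^ (i + q * j) = 0)
    (hO : ∀ i j, i + j + 2 = c1 →
      ∑ k ∈ Finset.univ.filter (fun k => ¬ Even (κ k)), u k * (g ^ κ k) ^ (i + q * j) = 0)
    (hc1 : c1 ≤ q) (hs : s + 2 ≤ m + c1) (hsn : s < c * (q - 1)) :
    ∃ C : Submodule F (Fin (c * (q - 1)) → F),
      dualH q (c * (q - 1)) C ≤ C ∧
      Module.finrank F C = (c * (q - 1)) - s ∧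
      IsLeast {d : ℕ | ∃ x ∈ C, x ≠ 0 ∧ wt x = d} (s + 1) := by
  have hpos : 0 < (q - 1) * (q + 1) := Nat.mul_pos (by omega) (by omega)
  have h0 : g ≠ 0 := hg.ne_zero hpos.ne'
  have hnorm : ∀ w : F, w ≠ 0 → w ^ q = w → ∃ v : F, v ≠ 0 ∧ v ^ (q + 1) = w := by
    intro w hw hwq
    obtain ⟨e, rfl⟩ := hgen w hw
    have h1 : g ^ (e * (q - 1)) = 1 := by
      have : (g ^ e) ^ (q - 1) * g ^ e = 1 * g ^ e := by
        rw [← pow_succ, Nat.sub_add_cancel (by omega), hwq, one_mul]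
      rw [pow_mul]
      exact mul_right_cancel₀ hw this
    rw [hg.pow_eq_one_iff_dvd, mul_comm e] at h1
    obtain ⟨f, rfl⟩ := Nat.dvd_of_mul_dvd_mul_left (by omega) h1
    exact ⟨g ^ f, pow_ne_zero _ h0, by rw [← pow_mul, mul_comm]⟩
  let h : F := g ^ (q + 1)
  have hh : IsPrimitiveRoot h (q - 1) := hg.pow hpos (mul_comm _ _)
  have hhq : h ^ q = h := by
    have := hh.pow_eq_one
    calc h ^ q = h ^ (q - 1 + 1) := by rw [Nat.sub_add_cancel (by omega)]
      _ = h := by rw [pow_succ, this, one_mul]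
  let W : Fin c × Fin (q - 1) → F := fun p => u p.1 * (h ^ (p.2 : ℕ)) ^ ((q - 2) * c1 + 2)
  let x : Fin c × Fin (q - 1) → F := fun p => g ^ κ p.1 * h ^ (p.2 : ℕ)
  have hh0 : h ≠ 0 := pow_ne_zero _ h0
  have hW0 : ∀ p, W p ≠ 0 := fun p => mul_ne_zero (hu _).1 (pow_ne_zero _ (pow_ne_zero _ hh0))
  have hWq : ∀ p, W p ^ q = W p := by
    intro p
    simp only [W]
    rw [mul_pow, (hu _).2, pow_right_comm _ _ q, pow_right_comm h _ q, hhq]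
  choose v hv0 hvW using fun p => hnorm (W p) (hW0 p) (hWq p)
  have hxinj : Function.Injective x := by
    rintro ⟨k, l⟩ ⟨k', l'⟩ hkl
    simp only [x, h] at hkl
    rw [← pow_mul, ← pow_mul, ← pow_add, ← pow_add] at hkl
    have hb : ∀ (k : Fin c) (l : Fin (q - 1)), κ k + (q + 1) * l < (q - 1) * (q + 1) := by
      intro k l
      have h1 := hκq k
      have h2 : (l : ℕ) + 1 ≤ q - 1 := l.2
      have h3 := Nat.mul_le_mul_right (q + 1) h2
      nlinarith
    have h1 := hg.pow_inj (hb k l) (hb k' l') hkl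
    have h2 := congrArg (· % (q + 1)) h1
    simp only [Nat.add_mul_mod_self_left, Nat.mod_eq_of_lt (hκq _)] at h2
    have h3 := hκ h2
    subst h3
    have h4 : (l : ℕ) = l' := by
      have : (q + 1) * (l : ℕ) = (q + 1) * l' := by omega
      exact Nat.eq_of_mul_eq_mul_left (by omega) this
    rw [Fin.ext h4]
  -- half power
  have hhalf : g ^ ((m - 1) * (q + 1)) = -1 := by
    have hp : IsPrimitiveRoot (g ^ ((m - 1) * (q + 1))) 2 := by
      refine hg.pow hpos ?_
      have : q - 1 = (m - 1) * 2 := by omega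
      rw [this]; ring
    exact hp.eq_neg_one_of_two_right
  have hall : ∀ i j, i + j + 2 = c1 → ∑ k, u k * (g ^ κ k) ^ (i + q * j) = 0 := by
    intro i j hij
    rw [← Finset.sum_filter_add_sum_filter_not Finset.univ (fun k => Even (κ k)), hE i j hij,
      hO i j hij, add_zero]
  have hall' : ∀ i j, i + j + 2 = c1 →
      ∑ k, u k * (g ^ κ k) ^ ((i + (m - 1)) + q * (j + (m - 1))) = 0 := by
    intro i j hij
    have he : ∀ k, u k * (g ^ κ k) ^ ((i + (m - 1)) + q * (j + (m - 1))) =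
        (-1) ^ κ k * (u k * (g ^ κ k) ^ (i + q * j)) := by
      intro k
      rw [← hhalf]
      ring
    simp_rw [he]
    rw [← Finset.sum_filter_add_sum_filter_not Finset.univ (fun k => Even (κ k))]
    have e1 : ∑ k ∈ Finset.univ.filter (fun k => Even (κ k)),
        (-1 : F) ^ κ k * (u k * (g ^ κ k) ^ (i + q * j)) = 0 := by
      rw [← hE i j hij]
      refine Finset.sum_congr rfl fun k hk => ?_
      rw [(Finset.mem_filter.1 hk).2.neg_one_pow, one_mul]
    have e2 : ∑ k ∈ Finset.univ.filter (fun k => ¬ Even (κ k)),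
        (-1 : F) ^ κ k * (u k * (g ^ κ k) ^ (i + q * j)) = 0 := by
      rw [← neg_eq_zero, ← hO i j hij, ← Finset.sum_neg_distrib]
      refine Finset.sum_congr rfl fun k hk => ?_
      rw [(Nat.not_even_iff_odd.1 (Finset.mem_filter.1 hk).2).neg_one_pow]; ring
    rw [e1, e2, add_zero]
  let σ := (finProdFinEquiv (m := c) (n := q - 1)).symm
  refine code_exists q _ s φ hφ hqq hsn (fun i => x (σ i)) (fun i => v (σ i))
    (hxinj.comp σ.injective) (fun i => hv0 _) ?_
  intro i hi j hj
  rw [Equiv.sum_comp σ (fun p => v p ^ (q + 1) * x p ^ (i + q * j))]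
  simp_rw [hvW]
  have hprod : ∀ p, W p * x p ^ (i + q * j) = (u p.1 * (g ^ κ p.1) ^ (i + q * j)) *
      (h ^ ((q - 2) * c1 + 2 + (i + q * j))) ^ (p.2 : ℕ) := by
    intro p
    simp only [W, x]
    ring
  simp_rw [hprod]
  rw [Fintype.sum_prod_type]
  simp only
  rw [← Finset.sum_mul_sum]
  by_cases h1 : h ^ ((q - 2) * c1 + 2 + (i + q * j)) = 1
  · rw [hh.pow_eq_one_iff_dvd] at h1
    have hd : ((q : ℤ) - 1) ∣ (i : ℤ) + j + 2 - c1 := by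
      have h2 : ((q - 1 : ℕ) : ℤ) ∣ (((q - 2) * c1 + 2 + (i + q * j) : ℕ) : ℤ) := by
        exact_mod_cast h1
      rw [Nat.cast_sub (by omega)] at h2
      push_cast [Nat.cast_sub (show 2 ≤ q by omega)] at h2
      have e : (i : ℤ) + j + 2 - c1 = (((q : ℤ) - 2) * c1 + 2 + (i + q * j)) - (q - 1) * (c1 + j) := by
        ring
      rw [e]
      exact dvd_sub h2 (dvd_mul_right _ _)
    obtain ⟨t, ht⟩ := hd
    have ht1 : t < 2 := by
      by_contra hcon
      push Not at hcon
      have : ((q : ℤ) - 1) * 2 ≤ (q - 1) * t := mul_le_mul_of_nonneg_left hcon (by omega)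
      omega
    have ht2 : -1 < t := by
      by_contra hcon
      push Not at hcon
      have : ((q : ℤ) - 1) * t ≤ (q - 1) * (-1) := mul_le_mul_of_nonneg_left (by omega) (by omega)
      omega
    have ht3 : t = 0 ∨ t = 1 := by omega
    rcases ht3 with rfl | rfl
    · rw [hall i j (by omega), zero_mul]
    · obtain ⟨i', rfl⟩ : ∃ i', i = i' + (m - 1) := ⟨i - (m - 1), by omega⟩
      obtain ⟨j', rfl⟩ : ∃ j', j = j' + (m - 1) := ⟨j - (m - 1), by omega⟩
      rw [hall' i' j' (by omega), zero_mul]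
  · have hgs : ∑ l : Fin (q - 1), (h ^ ((q - 2) * c1 + 2 + (i + q * j))) ^ (l : ℕ) = 0 := by
      rw [Fin.sum_univ_eq_sum_range
        (fun l => (h ^ ((q - 2) * c1 + 2 + (i + q * j))) ^ l) (q - 1)]
      have := geom_sum_mul (h ^ ((q - 2) * c1 + 2 + (i + q * j))) (q - 1)
      rw [pow_right_comm h _ (q - 1), hh.pow_eq_one, one_pow, sub_self] at this
      exact (mul_eq_zero.1 this).resolve_right (sub_ne_zero.2 h1)
    rw [hgs, mul_zero]

lemma card_even_fin (c : ℕ) :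
    (Finset.univ.filter (fun k : Fin c => Even (k : ℕ))).card = (c + 1) / 2 := by
  rw [Finset.card_filter, Fin.sum_univ_eq_sum_range (fun k => if Even k then 1 else 0) c]
  induction c with
  | zero => simp
  | succ n ih =>
    rw [Finset.sum_range_succ, ih]
    by_cases h : Even n
    · rw [if_pos h]; obtain ⟨t, rfl⟩ := h; omega
    · rw [if_neg h]; obtain ⟨t, rfl⟩ := Nat.not_even_iff_odd.1 h; omega

lemma frob_exists {F : Type*} [Field F] [Fintype F] (q : ℕ) (hpp : IsPrimePow q)
    (hF : Fintype.card F = q ^ 2) :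
    ∃ φ : F →+* F, (∀ x, φ x = x ^ q) ∧ ∀ x, φ (φ x) = x := by
  obtain ⟨p, hp, n, hpr, hcard⟩ := FiniteField.card' F
  obtain ⟨p', k, hp', hk, rfl⟩ := hpp
  have hp'' : p'.Prime := hp'.nat_prime
  have hdvd : p' ∣ p ^ (n : ℕ) := by
    rw [← hcard, hF, ← pow_mul]
    exact dvd_pow_self _ (by omega)
  have heq : p' = p := (Nat.prime_dvd_prime_iff_eq hp'' hpr).1 (hp''.dvd_of_dvd_pow hdvd)
  subst heq
  haveI : Fact p'.Prime := ⟨hpr⟩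
  haveI : ExpChar F p' := ExpChar.prime hpr
  refine ⟨iterateFrobenius F p' k, fun x => rfl, fun x => ?_⟩
  rw [iterateFrobenius_def, iterateFrobenius_def, ← pow_mul, ← pow_two, ← hF]
  exact FiniteField.pow_card x

lemma gen_exists {F : Type*} [Field F] [Fintype F] (q : ℕ) (hq : 2 ≤ q)
    (hF : Fintype.card F = q ^ 2) :
    ∃ g : F, IsPrimitiveRoot g ((q - 1) * (q + 1)) ∧ ∀ x : F, x ≠ 0 → ∃ e : ℕ, x = g ^ e := by
  classical
  obtain ⟨g, hg⟩ := IsCyclic.exists_generator (α := Fˣ)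
  refine ⟨(g : F), ?_, ?_⟩
  · rw [IsPrimitiveRoot.coe_units_iff, IsPrimitiveRoot.iff_orderOf,
      orderOf_eq_card_of_forall_mem_zpowers hg, Nat.card_eq_fintype_card, Fintype.card_units, hF]
    have := Nat.sq_sub_sq q 1
    rw [one_pow] at this
    rw [this, mul_comm]
  · intro x hx
    have h1 := hg (Units.mk0 x hx)
    rw [← mem_powers_iff_mem_zpowers] at h1
    obtain ⟨e, he⟩ := h1
    refine ⟨e, ?_⟩
    have := congrArg (fun y : Fˣ => (y : F)) he
    simpa using this.symm

/-- case q = 2ab−1 with a, b odd and coprime: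
there exists an [n, n−s, s+1]_{q²} Hermitian dual-containing code with
n = c(q−1), for 1 ≤ c ≤ 2(a+b−1) and 1 ≤ s ≤ ab + c₁ − 2, where c₁ = c if
c ≤ a+b−1 and c₁ = ⌊c/2⌋ otherwise. -/
theorem stmt_11 (q a b : ℕ) (ha : 0 < a) (hb : 0 < b) (haodd : Odd a)
    (hbodd : Odd b) (hab : Nat.gcd a b = 1) (hq : q = 2 * a * b - 1)
    (hodd : Odd q) (hpp : IsPrimePow q)
    (F : Type*) [Field F] [Fintype F] (hF : Fintype.card F = q ^ 2)
    (c s : ℕ) (hc1 : 1 ≤ c) (hc2 : c ≤ 2 * (a + b - 1))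
    (hs1 : 1 ≤ s) (hs2 : s ≤ a * b + (if c ≤ a + b - 1 then c else c / 2) - 2) :
    ∃ C : Submodule F (Fin (c * (q - 1)) → F),
      dualH q (c * (q - 1)) C ≤ C ∧
      Module.finrank F C = (c * (q - 1)) - s ∧
      IsLeast {d : ℕ | ∃ x ∈ C, x ≠ 0 ∧ wt x = d} (s + 1) := by
  obtain ⟨φ, hφ, hqq⟩ := frob_exists q hpp hF
  have hq2 : 2 ≤ q := hpp.two_le
  have hq3 : 3 ≤ q := by obtain ⟨t, rfl⟩ := hodd; omega
  obtain ⟨g, hg, hgen⟩ := gen_exists q hq2 hF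
  have hqm : q + 1 = 2 * (a * b) := by
    rw [mul_assoc] at hq; omega
  have habm : a + b - 1 ≤ a * b := by
    obtain ⟨a', rfl⟩ : ∃ a', a = a' + 1 := ⟨a - 1, by omega⟩
    obtain ⟨b', rfl⟩ : ∃ b', b = b' + 1 := ⟨b - 1, by omega⟩
    have : (a' + 1) * (b' + 1) = a' * b' + a' + b' + 1 := by ring
    omega
  generalize a * b = m at *
  have hpos : 0 < (q - 1) * (q + 1) := Nat.mul_pos (by omega) (by omega)
  have h0 : g ≠ 0 := hg.ne_zero hpos.ne'
  have hhalf : g ^ ((m - 1) * (q + 1)) = -1 := by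
    have hp : IsPrimitiveRoot (g ^ ((m - 1) * (q + 1))) 2 := by
      refine hg.pow hpos ?_
      have : q - 1 = (m - 1) * 2 := by omega
      rw [this]; ring
    exact hp.eq_neg_one_of_two_right
  have hε : g ^ m ≠ 0 := pow_ne_zero _ h0
  have hεq : φ (g ^ m) = - g ^ m := by
    rw [hφ, ← neg_one_mul, ← hhalf, ← pow_mul, ← pow_add]
    congr 1
    obtain ⟨m', rfl⟩ : ∃ m', m = m' + 1 := ⟨m - 1, by omega⟩
    have : q = 2 * m' + 1 := by omega
    subst this
    simp only [Nat.add_sub_cancel]; ring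
  by_cases hcc : c ≤ a + b - 1
  · rw [if_pos hcc] at hs2
    have hsn : s < c * (q - 1) := by
      have : q - 1 = 2 * (m - 1) := by omega
      rw [this]
      obtain ⟨c', rfl⟩ : ∃ c', c = c' + 1 := ⟨c - 1, by omega⟩
      obtain ⟨m', rfl⟩ : ∃ m', m = m' + 2 := ⟨m - 2, by omega⟩
      have : (c' + 1) * (2 * (m' + 2 - 1)) = 2 * (c' * m') + 2 * c' + 2 * m' + 2 := by
        rw [show m' + 2 - 1 = m' + 1 by omega]; ring
      omega
    have hκq : ∀ k : Fin c, 2 * (k : ℕ) < q + 1 := fun k => by omega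
    obtain ⟨u, hu, hsum⟩ := weights_base q φ hφ hqq (g ^ m) hε hεq
      (fun k : Fin c => g ^ (2 * (k : ℕ))) (fun k => pow_ne_zero _ h0) Finset.univ
      (fun k _ k' _ hkk => prim_D_ne q hq2 g hg _ _ (hκq k) (hκq k') (by
        intro h; exact hkk (Fin.ext (by omega))))
    refine main_code q m c c s hq3 hqm φ hφ hqq g hg hgen (fun k => 2 * (k : ℕ)) ?_ hκq u
      (fun k => hu k (Finset.mem_univ _)) ?_ ?_ (by omega) (by omega) hsn
    · intro k k' h
      simp only at h
      exact Fin.ext (by omega)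
    · intro i j hij
      rw [Finset.filter_true_of_mem (fun k _ => even_two_mul _)]
      exact hsum i j (by simpa using hij)
    · intro i j hij
      rw [Finset.filter_false_of_mem (fun k _ => by simp), Finset.sum_empty]
  · rw [if_neg hcc] at hs2
    have hsn : s < c * (q - 1) := by
      have : q - 1 = 2 * (m - 1) := by omega
      rw [this]
      obtain ⟨c', rfl⟩ : ∃ c', c = c' + 1 := ⟨c - 1, by omega⟩
      obtain ⟨m', rfl⟩ : ∃ m', m = m' + 2 := ⟨m - 2, by omega⟩
      have : (c' + 1) * (2 * (m' + 2 - 1)) = 2 * (c' * m') + 2 * c' + 2 * m' + 2 := by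
        rw [show m' + 2 - 1 = m' + 1 by omega]; ring
      omega
    have hκq : ∀ k : Fin c, (k : ℕ) < q + 1 := fun k => by omega
    have hDD : ∀ S : Finset (Fin c), ∀ k ∈ S, ∀ k' ∈ S, k ≠ k' →
        (g ^ (k : ℕ)) ^ q * g ^ (k' : ℕ) - (g ^ (k' : ℕ)) ^ q * g ^ (k : ℕ) ≠ 0 :=
      fun S k _ k' _ hkk => prim_D_ne q hq2 g hg _ _ (hκq k) (hκq k') (by
        intro h; exact hkk (Fin.ext h))
    have hcE := card_even_fin c
    have hcO : (Finset.univ.filter (fun k : Fin c => ¬ Even (k : ℕ))).card = c / 2 := by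
      have := Finset.card_filter_add_card_filter_not (s := (Finset.univ : Finset (Fin c)))
        (fun k : Fin c => Even (k : ℕ))
      rw [hcE, Finset.card_univ, Fintype.card_fin] at this
      omega
    obtain ⟨u1, hu1, hsum1⟩ := weights_base q φ hφ hqq (g ^ m) hε hεq
      (fun k : Fin c => g ^ (k : ℕ)) (fun k => pow_ne_zero _ h0)
      (Finset.univ.filter (fun k : Fin c => ¬ Even (k : ℕ))) (hDD _)
    have hex : ∃ u : Fin c → F,
        (∀ k ∈ Finset.univ.filter (fun k : Fin c => Even (k : ℕ)), u k ≠ 0 ∧ u k ^ q = u k) ∧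
        ∀ i j, i + j + 2 = c / 2 → ∑ k ∈ Finset.univ.filter (fun k : Fin c => Even (k : ℕ)),
          u k * (g ^ (k : ℕ)) ^ (i + q * j) = 0 := by
      rcases Nat.even_or_odd' c with ⟨t, ht | ht⟩
      · obtain ⟨u, hu, hsum⟩ := weights_base q φ hφ hqq (g ^ m) hε hεq
          (fun k : Fin c => g ^ (k : ℕ)) (fun k => pow_ne_zero _ h0)
          (Finset.univ.filter (fun k : Fin c => Even (k : ℕ))) (hDD _)
        exact ⟨u, hu, fun i j hij => hsum i j (by omega)⟩
      · obtain ⟨u, hu, hsum⟩ := weights_succ q φ hφ hqq (g ^ m) hε hεq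
          (fun k : Fin c => g ^ (k : ℕ)) (fun k => pow_ne_zero _ h0)
          (Finset.univ.filter (fun k : Fin c => Even (k : ℕ))) (hDD _) (g ^ 1) (fun k hk =>
            prim_D_ne q hq2 g hg _ _ (hκq k) (by omega) (by
              intro h
              have h2 := (Finset.mem_filter.1 hk).2
              rw [h] at h2
              exact absurd h2 (by decide)))
        exact ⟨u, hu, fun i j hij => hsum i j (by omega)⟩
    obtain ⟨u0, hu0, hsum0⟩ := hex
    refine main_code q m c (c / 2) s hq3 hqm φ hφ hqq g hg hgen (fun k => (k : ℕ))
      Fin.val_injective hκq (fun k => if Even (k : ℕ) then u0 k else u1 k)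
      ?_ ?_ ?_ (by omega) (by omega) hsn
    · intro k
      by_cases hk : Even (k : ℕ)
      · simp only [if_pos hk]
        exact hu0 k (by simp [hk])
      · simp only [if_neg hk]
        exact hu1 k (Finset.mem_filter.2 ⟨Finset.mem_univ _, hk⟩)
    · intro i j hij
      rw [← hsum0 i j hij]
      refine Finset.sum_congr rfl fun k hk => ?_
      rw [if_pos (Finset.mem_filter.1 hk).2]
    · intro i j hij
      rw [← hsum1 i j (by omega)]
      refine Finset.sum_congr rfl fun k hk => ?_
      rw [if_neg (Finset.mem_filter.1 hk).2]
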